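/- Let p ≥ 1 and k ≥ 0 be integers and let B be the broom consisting of a path v_1, …, v_p with k pendant leaves attached to v_1, and set v = v_1. Then the number of subtrees of B containing v is 2^k·p, the number of subtrees of B not containing v is k + C(p,2), and hence N(B) = 2^k·p + k + C(p,2), where C(p,2) = p(p−1)/2. -/

import Mathlib

/-- A subtree of a graph: a nonempty set of vertices inducing a connected subgraph. -/
def IsSubtree {V : Type*} (G : SimpleGraph V) (S : Finset V) : Prop :=
  S.Nonempty ∧ (G.induce (S : Set V)).Connected

/-- `N(T)`: the number of subtrees. -/
noncomputable def numSubtrees {V : Type*} [Fintype V] (G : SimpleGraph V) : ℕ :=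
  Nat.card {S : Finset V // IsSubtree G S}

/-- `N(T,v)`: the number of subtrees containing the vertex `v`. -/
noncomputable def numSubtreesContaining {V : Type*} [Fintype V] (G : SimpleGraph V) (v : V) : ℕ :=
  Nat.card {S : Finset V // IsSubtree G S ∧ v ∈ S}

/-- The broom with parameters `p` and `k`: a path `v_1, …, v_p` (the `Sum.inl` vertices,
where `v_1 = Sum.inl 0`) together with `k` pendant leaves (the `Sum.inr` vertices)
attached to `v_1`. -/
def broom (p k : ℕ) : SimpleGraph (Fin p ⊕ Fin k) :=
  SimpleGraph.fromRel fun a b => match a, b with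
    | Sum.inl i, Sum.inl j => (i : ℕ) + 1 = (j : ℕ)
    | Sum.inl i, Sum.inr _ => (i : ℕ) = 0
    | _, _ => False

namespace IsSubtree

variable {V : Type*} {G : SimpleGraph V} {S : Finset V}

/-- A subtree split into two nonempty parts has an edge between the parts. -/
theorem exists_adj_of_cut (hS : IsSubtree G S) (A : V → Prop) {x y : V}
    (hx : x ∈ S) (hy : y ∈ S) (hAx : A x) (hAy : ¬ A y) :
    ∃ a ∈ S, ∃ b ∈ S, G.Adj a b ∧ A a ∧ ¬ A b := by
  obtain ⟨w⟩ := hS.2.preconnected ⟨x, hx⟩ ⟨y, hy⟩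
  obtain ⟨d, -, h₁, h₂⟩ := w.exists_boundary_dart {z | A z.1} hAx hAy
  exact ⟨d.fst.1, d.fst.2, d.snd.1, d.snd.2, d.adj, h₁, h₂⟩

/-- A set in which every vertex other than `r` has a neighbour of smaller rank is a subtree. -/
theorem of_rank (f : V → ℕ) {r : V} (hr : r ∈ S)
    (h : ∀ x ∈ S, x ≠ r → ∃ y ∈ S, G.Adj x y ∧ f y < f x) : IsSubtree G S := by
  have reach : ∀ n, ∀ x (hx : x ∈ S), f x = n →
      (G.induce (S : Set V)).Reachable ⟨x, hx⟩ ⟨r, hr⟩ := by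
    intro n
    induction n using Nat.strong_induction_on with
    | _ n ih =>
      intro x hx hn
      by_cases hxr : x = r
      · subst hxr; exact SimpleGraph.Reachable.refl _
      · obtain ⟨y, hy, hadj, hlt⟩ := h x hx hxr
        have hxy : (G.induce (S : Set V)).Adj ⟨x, hx⟩ ⟨y, hy⟩ := hadj
        exact hxy.reachable.trans (ih (f y) (hn ▸ hlt) y hy rfl)
  have : Nonempty (S : Set V) := ⟨⟨r, hr⟩⟩
  refine ⟨⟨r, hr⟩, ⟨fun x y => ?_⟩⟩
  exact (reach _ x.1 x.2 rfl).trans (reach _ y.1 y.2 rfl).symm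

end IsSubtree

section Broom

variable {p k : ℕ}

theorem broom_adj_inl_inl {i j : Fin p} :
    (broom p k).Adj (Sum.inl i) (Sum.inl j) ↔ (i : ℕ) + 1 = j ∨ (j : ℕ) + 1 = i := by
  simp only [broom, SimpleGraph.fromRel_adj, ne_eq, Sum.inl.injEq, Fin.ext_iff]
  omega

theorem broom_adj_inl_inr {i : Fin p} {l : Fin k} :
    (broom p k).Adj (Sum.inl i) (Sum.inr l) ↔ (i : ℕ) = 0 := by
  simp [broom]

theorem broom_adj_inr_inl {i : Fin p} {l : Fin k} :
    (broom p k).Adj (Sum.inr l) (Sum.inl i) ↔ (i : ℕ) = 0 := by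
  simp [broom]

theorem broom_not_adj_inr_inr {l l' : Fin k} :
    ¬ (broom p k).Adj (Sum.inr l) (Sum.inr l') := by
  simp [broom]

/-- A subtree of a broom meets the path in an interval. -/
theorem IsSubtree.inl_mem_of_le {S : Finset (Fin p ⊕ Fin k)} (hS : IsSubtree (broom p k) S)
    {i j l : Fin p} (hi : Sum.inl i ∈ S) (hj : Sum.inl j ∈ S) (hil : i ≤ l) (hlj : l ≤ j) :
    Sum.inl l ∈ S := by
  by_contra hl
  have hne : l ≠ j := by rintro rfl; exact hl hj
  obtain ⟨a, ha, b, hb, hadj, ⟨m, rfl, hm⟩, hB⟩ := hS.exists_adj_of_cut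
    (fun x => ∃ m : Fin p, x = Sum.inl m ∧ l < m) hj hi ⟨j, rfl, lt_of_le_of_ne hlj hne⟩
    (by rintro ⟨m, hm, hlm⟩; cases hm; exact absurd hil (not_le.2 hlm))
  rcases b with b | b
  · have hbl : ¬ l < b := fun h => hB ⟨b, rfl, h⟩
    have hbne : b ≠ l := by rintro rfl; exact hl hb
    rw [broom_adj_inl_inl] at hadj
    omega
  · rw [broom_adj_inl_inr] at hadj
    omega

/-- A subtree of a broom that contains a leaf and avoids `v_1` consists of that leaf. -/
theorem IsSubtree.eq_singleton_of_inr_mem {S : Finset (Fin p ⊕ Fin k)}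
    (hS : IsSubtree (broom p k) S) (hp : 0 < p) (h0 : Sum.inl ⟨0, hp⟩ ∉ S) {l : Fin k}
    (hl : Sum.inr l ∈ S) : S = {Sum.inr l} := by
  refine Finset.eq_singleton_iff_unique_mem.2 ⟨hl, fun x hx => ?_⟩
  by_contra hne
  obtain ⟨a, -, b, hb, hadj, rfl, -⟩ :=
    hS.exists_adj_of_cut (fun y => y = Sum.inr l) hl hx rfl hne
  rcases b with b | b
  · rw [broom_adj_inr_inl] at hadj
    have : b = ⟨0, hp⟩ := Fin.ext hadj
    exact h0 (this ▸ hb)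
  · exact broom_not_adj_inr_inr hadj

theorem isSubtree_broom_Iic_disjSum (m : Fin p) (L : Finset (Fin k)) :
    IsSubtree (broom p k) ((Finset.Iic m).disjSum L) := by
  have hp : 0 < p := m.pos
  have h0 : Sum.inl ⟨0, hp⟩ ∈ (Finset.Iic m).disjSum L := by simp [Fin.le_def]
  refine IsSubtree.of_rank (Sum.elim (fun i => (i : ℕ)) fun _ => 1) h0 ?_
  rintro (i | l) hx hne
  · have hi : (i : ℕ) ≠ 0 := fun h => hne (congrArg Sum.inl (Fin.ext h))
    have him : i ≤ m := by simpa using hx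
    refine ⟨Sum.inl ⟨i - 1, by omega⟩, ?_, ?_, ?_⟩
    · simp only [Finset.inl_mem_disjSum, Finset.mem_Iic, Fin.le_def] at him ⊢
      omega
    · rw [broom_adj_inl_inl]
      simp only
      omega
    · simp only [Sum.elim_inl]
      omega
  · exact ⟨_, h0, broom_adj_inr_inl.2 rfl, by simp⟩

theorem isSubtree_broom_Ioc_disjSum {a b : Fin p} (hab : a < b) :
    IsSubtree (broom p k) ((Finset.Ioc a b).disjSum ∅) := by
  have hr : (Sum.inl ⟨a + 1, by omega⟩ : Fin p ⊕ Fin k) ∈ (Finset.Ioc a b).disjSum ∅ := by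
    simp only [Finset.inl_mem_disjSum, Finset.mem_Ioc, Fin.le_def, Fin.lt_def] at hab ⊢
    omega
  refine IsSubtree.of_rank (Sum.elim (fun i => (i : ℕ)) fun _ => 1) hr ?_
  rintro (i | l) hx hne
  · have hi : (i : ℕ) ≠ a + 1 := fun h => hne (congrArg Sum.inl (Fin.ext h))
    simp only [Finset.inl_mem_disjSum, Finset.mem_Ioc, Fin.le_def, Fin.lt_def] at hx
    refine ⟨Sum.inl ⟨i - 1, by omega⟩, ?_, ?_, ?_⟩
    · simp only [Finset.inl_mem_disjSum, Finset.mem_Ioc, Fin.le_def, Fin.lt_def]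
      omega
    · rw [broom_adj_inl_inl]
      simp only
      omega
    · simp only [Sum.elim_inl]
      omega
  · simp at hx

theorem isSubtree_broom_singleton (x : Fin p ⊕ Fin k) : IsSubtree (broom p k) {x} :=
  IsSubtree.of_rank (fun _ => 0) (Finset.mem_singleton_self x)
    fun _ hy hne => absurd (Finset.mem_singleton.1 hy) hne

theorem isSubtree_broom_and_mem_iff (hp : 0 < p) {S : Finset (Fin p ⊕ Fin k)} :
    IsSubtree (broom p k) S ∧ Sum.inl ⟨0, hp⟩ ∈ S ↔
      ∃ (m : Fin p) (L : Finset (Fin k)), (Finset.Iic m).disjSum L = S := by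
  constructor
  · rintro ⟨hS, h0⟩
    have hne : S.toLeft.Nonempty := ⟨⟨0, hp⟩, by simpa using h0⟩
    refine ⟨S.toLeft.max' hne, S.toRight, ?_⟩
    have hmax : Sum.inl (S.toLeft.max' hne) ∈ S := Finset.mem_toLeft.1 (Finset.max'_mem _ hne)
    ext (i | l)
    · simp only [Finset.inl_mem_disjSum, Finset.mem_Iic]
      exact ⟨fun h => hS.inl_mem_of_le h0 hmax (Fin.le_def.2 (Nat.zero_le _)) h,
        fun h => Finset.le_max' _ _ (Finset.mem_toLeft.2 h)⟩
    · simp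
  · rintro ⟨m, L, rfl⟩
    exact ⟨isSubtree_broom_Iic_disjSum m L, by simp [Fin.le_def]⟩

theorem isSubtree_broom_and_notMem_iff (hp : 0 < p) {S : Finset (Fin p ⊕ Fin k)} :
    IsSubtree (broom p k) S ∧ Sum.inl ⟨0, hp⟩ ∉ S ↔
      (∃ l : Fin k, {Sum.inr l} = S) ∨
        ∃ a b : Fin p, a < b ∧ (Finset.Ioc a b).disjSum ∅ = S := by
  constructor
  · rintro ⟨hS, h0⟩
    by_cases hl : ∃ l, Sum.inr l ∈ S
    · obtain ⟨l, hl⟩ := hl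
      exact Or.inl ⟨l, (hS.eq_singleton_of_inr_mem hp h0 hl).symm⟩
    · push Not at hl
      obtain ⟨x | x, hx⟩ := hS.1
      swap
      · exact absurd hx (hl x)
      have hne : S.toLeft.Nonempty := ⟨x, Finset.mem_toLeft.2 hx⟩
      obtain ⟨b, hb, hupp⟩ := S.toLeft.exists_max_image id hne
      obtain ⟨c, hcS, hlow⟩ := S.toLeft.exists_min_image id hne
      have hle : c ≤ b := hlow b hb
      have hmax := Finset.mem_toLeft.1 hb
      have hmin := Finset.mem_toLeft.1 hcS
      have hc : (c : ℕ) ≠ 0 := by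
        intro h
        have : c = ⟨0, hp⟩ := Fin.ext h
        exact h0 (this ▸ hmin)
      refine Or.inr ⟨⟨c - 1, by omega⟩, b, by simp only [Fin.lt_def, Fin.le_def] at hle ⊢; omega, ?_⟩
      ext (i | l)
      · simp only [Finset.inl_mem_disjSum, Finset.mem_Ioc]
        constructor
        · rintro ⟨h₁, h₂⟩
          refine hS.inl_mem_of_le hmin hmax ?_ h₂
          simp only [Fin.lt_def, Fin.le_def] at h₁ ⊢
          omega
        · intro h
          have h₁ : c ≤ i := hlow i (Finset.mem_toLeft.2 h)
          refine ⟨?_, hupp i (Finset.mem_toLeft.2 h)⟩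
          simp only [Fin.lt_def, Fin.le_def] at h₁ ⊢
          omega
      · simpa using hl l
  · rintro (⟨l, rfl⟩ | ⟨a, b, hab, rfl⟩)
    · exact ⟨isSubtree_broom_singleton _, by simp⟩
    · exact ⟨isSubtree_broom_Ioc_disjSum hab, fun h => by
        simp only [Finset.inl_mem_disjSum, Finset.mem_Ioc, Fin.lt_def] at h
        omega⟩

theorem numSubtreesContaining_broom (hp : 0 < p) :
    numSubtreesContaining (broom p k) (Sum.inl ⟨0, hp⟩) = 2 ^ k * p := by
  let f : Fin p × Finset (Fin k) →
      {S : Finset (Fin p ⊕ Fin k) // IsSubtree (broom p k) S ∧ Sum.inl ⟨0, hp⟩ ∈ S} :=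
    fun x => ⟨(Finset.Iic x.1).disjSum x.2, (isSubtree_broom_and_mem_iff hp).2 ⟨_, _, rfl⟩⟩
  have hf : Function.Bijective f := by
    constructor
    · rintro ⟨m, L⟩ ⟨m', L'⟩ h
      have h := congrArg Subtype.val h
      have hl := congrArg Finset.toLeft h
      have hr := congrArg Finset.toRight h
      simp only [f, Finset.toLeft_disjSum, Finset.toRight_disjSum] at hl hr
      have hm : m = m' := le_antisymm
        (Finset.mem_Iic.1 (hl ▸ Finset.mem_Iic.2 le_rfl))
        (Finset.mem_Iic.1 (hl ▸ Finset.mem_Iic.2 le_rfl))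
      rw [hm, hr]
    · rintro ⟨S, hS⟩
      obtain ⟨m, L, h⟩ := (isSubtree_broom_and_mem_iff hp).1 hS
      exact ⟨(m, L), Subtype.ext h⟩
  rw [numSubtreesContaining, ← Nat.card_congr (Equiv.ofBijective f hf)]
  simp [mul_comm]

theorem card_subtrees_broom_notMem (hp : 0 < p) :
    Nat.card {S : Finset (Fin p ⊕ Fin k) //
      IsSubtree (broom p k) S ∧ Sum.inl ⟨0, hp⟩ ∉ S} = k + p.choose 2 := by
  let f : Fin k ⊕ (Σ b : Fin p, Fin b) →
      {S : Finset (Fin p ⊕ Fin k) // IsSubtree (broom p k) S ∧ Sum.inl ⟨0, hp⟩ ∉ S} :=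
    Sum.elim
      (fun l => ⟨{Sum.inr l}, (isSubtree_broom_and_notMem_iff hp).2 (Or.inl ⟨l, rfl⟩)⟩)
      fun x => ⟨(Finset.Ioc ⟨x.2, x.2.2.trans x.1.2⟩ x.1).disjSum ∅,
        (isSubtree_broom_and_notMem_iff hp).2 (Or.inr ⟨_, _, x.2.2, rfl⟩)⟩
  have hf : Function.Bijective f := by
    constructor
    · rintro (l | ⟨b, a⟩) (l' | ⟨b', a'⟩) h
      · have h := congrArg Subtype.val h
        simpa [f] using h
      · have h := Finset.ext_iff.1 (congrArg Subtype.val h) (Sum.inr l)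
        simp [f] at h
      · have h := Finset.ext_iff.1 (congrArg Subtype.val h) (Sum.inr l')
        simp [f] at h
      · have h := congrArg Finset.toLeft (congrArg Subtype.val h)
        simp only [f, Sum.elim_inr, Finset.toLeft_disjSum] at h
        have ha := a.2
        have ha' := a'.2
        have mem (i : Fin p) : ((a : ℕ) < i ∧ (i : ℕ) ≤ b) ↔ ((a' : ℕ) < i ∧ (i : ℕ) ≤ b') := by
          simpa only [Finset.mem_Ioc, Fin.lt_def, Fin.le_def] using Finset.ext_iff.1 h i
        have h₁ := mem b
        have h₂ := mem b'
        have h₃ := mem ⟨a + 1, by omega⟩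
        have h₄ := mem ⟨a' + 1, by omega⟩
        simp only at h₃ h₄
        obtain rfl : b = b' := Fin.ext (by omega)
        obtain rfl : a = a' := Fin.ext (by omega)
        rfl
    · rintro ⟨S, hS⟩
      obtain ⟨l, h⟩ | ⟨a, b, hab, h⟩ := (isSubtree_broom_and_notMem_iff hp).1 hS
      · exact ⟨Sum.inl l, Subtype.ext h⟩
      · exact ⟨Sum.inr ⟨b, ⟨a, hab⟩⟩, Subtype.ext h⟩
  rw [← Nat.card_congr (Equiv.ofBijective f hf), Nat.card_eq_fintype_card, Fintype.card_sum,
    Fintype.card_sigma]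
  simp only [Fintype.card_fin]
  rw [Fin.sum_univ_eq_sum_range (fun i => i), Finset.sum_range_id, Nat.choose_two_right]

end Broom

/-- Subtrees split into those containing a given vertex and those avoiding it. -/
theorem numSubtrees_eq_add {V : Type*} [Fintype V] (G : SimpleGraph V) (v : V) :
    numSubtrees G = numSubtreesContaining G v +
      Nat.card {S : Finset V // IsSubtree G S ∧ v ∉ S} := by
  classical
  rw [numSubtrees, numSubtreesContaining, ← Nat.card_sum]
  exact Nat.card_congr <|
    (Equiv.sumCompl fun S : {S : Finset V // IsSubtree G S} => v ∈ S.1).symm.trans <|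
      Equiv.sumCongr (Equiv.subtypeSubtypeEquivSubtypeInter _ fun S : Finset V => v ∈ S)
        (Equiv.subtypeSubtypeEquivSubtypeInter _ fun S : Finset V => v ∉ S)

theorem stmt19 (p k : ℕ) (hp : 0 < p) :
    numSubtreesContaining (broom p k) (Sum.inl ⟨0, hp⟩) = 2 ^ k * p ∧
    Nat.card {S : Finset (Fin p ⊕ Fin k) //
      IsSubtree (broom p k) S ∧ Sum.inl ⟨0, hp⟩ ∉ S} = k + p.choose 2 ∧
    numSubtrees (broom p k) = 2 ^ k * p + k + p.choose 2 := by
  refine ⟨numSubtreesContaining_broom hp, card_subtrees_broom_notMem hp, ?_⟩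
  rw [numSubtrees_eq_add _ (Sum.inl ⟨0, hp⟩), numSubtreesContaining_broom,
    card_subtrees_broom_notMem, add_assoc]
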